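/- (Characterization of minimal pairs.) Let n = 2 or n ≥ 7. A pair (A, B) of n×n normal matrices over R = {0, −1} is a minimal mutually orthogonal pair if and only if A ≠ B and there exist k, m ∈ [n] with k ≠ m such that one of the following four cases holds: (0) A is V(m;k)-generic and B is V(k;m)-generic; (1) A is (W(m;k) ∩ Z(k;m))-generic and B is (W(k;m) ∩ Z(m;k))-generic; (2) A is W(m;k)-generic and B is (W(k;m) ∩ Z(m;k) ∩ Z(k;m))-generic; (3) A is (W(m;k) ∩ Z(m;k) ∩ Z(k;m))-generic and B is W(k;m)-generic. -/

import Mathlib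

/-- A matrix over `R = {0,-1} ⊆ ℤ` is normal: zero diagonal, entries `0` or `-1`. -/
def IsNormal {n : ℕ} (A : Matrix (Fin n) (Fin n) ℤ) : Prop :=
  (∀ i, A i i = 0) ∧ ∀ i j, A i j = 0 ∨ A i j = -1

/-- Tropical (max-plus) matrix product: `(A⊙B) i j = max_k (A i k + B k j)`. -/
noncomputable def tropMul {n : ℕ} (A B : Matrix (Fin n) (Fin n) ℤ) :
    Matrix (Fin n) (Fin n) ℤ :=
  Matrix.of fun i j => sSup (Set.range fun k => A i k + B k j)

/-- Tropical sum: entrywise maximum. -/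
def tropSum {n : ℕ} (A B : Matrix (Fin n) (Fin n) ℤ) : Matrix (Fin n) (Fin n) ℤ :=
  Matrix.of fun i j => max (A i j) (B i j)

/-- `nu A` is the number of zero entries of `A`. -/
def nu {n : ℕ} (A : Matrix (Fin n) (Fin n) ℤ) : ℕ :=
  (Finset.univ.filter (fun p : Fin n × Fin n => A p.1 p.2 = 0)).card

/-- `A` is `V(m;k)`-generic. -/
def genV {n : ℕ} (m k : Fin n) (A : Matrix (Fin n) (Fin n) ℤ) : Prop :=
  ∀ i j, A i j = 0 ↔ (i = j ∨ i = m ∨ j = k)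

/-- `A` is `W(m;k)`-generic. -/
def genW {n : ℕ} (m k : Fin n) (A : Matrix (Fin n) (Fin n) ℤ) : Prop :=
  ∀ i j, A i j = 0 ↔ (i = j ∨ (i = m ∧ j ≠ k) ∨ (j = k ∧ i ≠ m))

/-- `A` is `(W(m;k) ∩ Z(k;m))`-generic. -/
def genWZ {n : ℕ} (m k : Fin n) (A : Matrix (Fin n) (Fin n) ℤ) : Prop :=
  ∀ i j, A i j = 0 ↔ (i = j ∨ (i = m ∧ j ≠ k) ∨ (j = k ∧ i ≠ m) ∨ (i = k ∧ j = m))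

/-- `A` is `(W(m;k) ∩ Z(m;k) ∩ Z(k;m))`-generic. -/
def genWZZ {n : ℕ} (m k : Fin n) (A : Matrix (Fin n) (Fin n) ℤ) : Prop :=
  ∀ i j, A i j = 0 ↔ (i = j ∨ i = m ∨ j = k ∨ (i = k ∧ j = m))

/-!
Row by row, a pair of mutually orthogonal normal matrices is a pair `P, Q` of families of zero sets
with `i ∈ P i ∩ Q i`, in which the sets `Q k`, `k ∈ P i`, cover everything, and likewise with `P`
and `Q` exchanged. A row with `P i = {i, x}` therefore forces `Q x` to contain the complement of
`Q i`: cheap rows have to be paid for by an expensive row at a centre. With `|P i| + |Q i|` as the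
weight of row `i`, a total of at most `6 n - 6` and `n ≥ 7` force a row of weight `4`, say
`P i = {i, x}` and `Q i = {i, y}`. Its centres satisfy `x ≠ y`, every other row of weight `4` has
the same centres, and together with a second such row this makes the weights at `x` and `y` at least
`n + 1`. As `2 (n + 1) + 4 (n - 2) = 6 n - 6`, equality holds throughout.
-/

open scoped Finset

section Rows

variable {ι : Type*}

theorem exists_eq_pair_of_mem_of_card_eq_two [DecidableEq ι] {s : Finset ι} {a : ι}
    (ha : a ∈ s) (hs : #s = 2) : ∃ b, b ≠ a ∧ s = {a, b} := by
  obtain ⟨b, hb⟩ := Finset.card_eq_one.1 (show #(s.erase a) = 1 by simp [ha, hs])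
  have hba : b ∈ s.erase a := by simp [hb]
  exact ⟨b, Finset.ne_of_mem_erase hba, by rw [← hb, Finset.insert_erase ha]⟩

/-- Mutual orthogonality of two normal matrices, expressed through the zero sets `P i` and `Q i` of
their `i`-th rows. -/
structure MutuallyOrthogonal (P Q : ι → Finset ι) : Prop where
  mem_left : ∀ i, i ∈ P i
  mem_right : ∀ i, i ∈ Q i
  cover_left : ∀ i j, ∃ k ∈ P i, j ∈ Q k
  cover_right : ∀ i j, ∃ k ∈ Q i, j ∈ P k

namespace MutuallyOrthogonal

variable {P Q : ι → Finset ι} {i j x y : ι}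

theorem symm (h : MutuallyOrthogonal P Q) : MutuallyOrthogonal Q P :=
  ⟨h.mem_right, h.mem_left, h.cover_right, h.cover_left⟩

theorem mem_or_mem_of_eq_pair [DecidableEq ι] (h : MutuallyOrthogonal P Q) (hP : P i = {i, x})
    (j : ι) : j ∈ Q i ∨ j ∈ Q x := by
  simpa [hP] using h.cover_left i j

theorem mem_right_of_eq_pair [DecidableEq ι] (h : MutuallyOrthogonal P Q) (hij : i ≠ j)
    (hPi : P i = {i, x}) (hPj : P j = {j, x}) (hQi : Q i = {i, y}) (hQj : Q j = {j, y})
    {z : ι} (hz : z ≠ y) : z ∈ Q x := by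
  have hzi : z = i ∨ z ∈ Q x := by
    simpa [hQi, hz] using h.mem_or_mem_of_eq_pair hPi z
  have hzj : z = j ∨ z ∈ Q x := by
    simpa [hQj, hz] using h.mem_or_mem_of_eq_pair hPj z
  grind

end MutuallyOrthogonal

variable [Fintype ι]

theorem sum_add_mul_card_le_sum {f : ι → ℕ} {c : ℕ} (s : Finset ι) (hc : ∀ i ∉ s, c ≤ f i) :
    ∑ i ∈ s, f i + c * Fintype.card ι ≤ ∑ i, f i + c * #s := by
  classical
  have hcompl : #sᶜ * c ≤ ∑ i ∈ sᶜ, f i := by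
    simpa using Finset.card_nsmul_le_sum sᶜ f c fun i hi => hc i (Finset.mem_compl.1 hi)
  rw [← Finset.sum_add_sum_compl s f, ← Finset.card_add_card_compl s]
  linarith

theorem add_add_add_mul_card_le_sum {f : ι → ℕ} {c : ℕ} {x y z : ι} (hzx : z ≠ x) (hzy : z ≠ y)
    (hxy : x ≠ y) (hc : ∀ i, i ≠ z → i ≠ x → i ≠ y → c ≤ f i) :
    f z + f x + f y + c * Fintype.card ι ≤ ∑ i, f i + c * 3 := by
  classical
  have hbound := sum_add_mul_card_le_sum (f := f) (c := c) {z, x, y} (by simpa using hc)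
  rwa [Finset.sum_insert (by simp [hzx, hzy]), Finset.sum_pair hxy, ← add_assoc,
    Finset.card_eq_three.2 ⟨z, x, y, hzx, hzy, hxy, rfl⟩] at hbound

theorem card_le_card_add_one {s : Finset ι} {a : ι} (hs : ∀ i, i ≠ a → i ∈ s) :
    Fintype.card ι ≤ #s + 1 := by
  classical
  have hcard : #(Finset.univ.erase a) ≤ #s :=
    Finset.card_le_card fun i hi => hs i (Finset.ne_of_mem_erase hi)
  rw [Finset.card_erase_of_mem (Finset.mem_univ a), Finset.card_univ] at hcard
  omega

theorem eq_insert_compl_of_card_add_card_le [DecidableEq ι] {s t : Finset ι} {a : ι}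
    (has : a ∈ s) (hat : a ∈ t) (hunion : s ∪ t = Finset.univ)
    (hcard : #s + #t ≤ Fintype.card ι + 1) : s = insert a tᶜ := by
  have hinter : #(s ∩ t) ≤ 1 := by
    have := Finset.card_union_add_card_inter s t
    rw [hunion, Finset.card_univ] at this
    omega
  ext j
  have hj : j ∈ s ∪ t := hunion ▸ Finset.mem_univ j
  have hja : j ∈ s → j ∈ t → j = a := fun hjs hjt =>
    Finset.card_le_one.1 hinter j (Finset.mem_inter.2 ⟨hjs, hjt⟩) a (Finset.mem_inter.2 ⟨has, hat⟩)
  grind [Finset.mem_compl]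

/-- The shape of the zero sets of a minimal pair, with centres `x` and `y`. It leaves free whether
`y ∈ Q x` and whether `x ∈ P y`, which gives the four cases of the classification. -/
structure IsExtremalPair [DecidableEq ι] (P Q : ι → Finset ι) (x y : ι) : Prop where
  ne : x ≠ y
  left_eq_pair : ∀ i, i ≠ x → i ≠ y → P i = {i, x}
  right_eq_pair : ∀ i, i ≠ x → i ≠ y → Q i = {i, y}
  left_center : P x = insert x (Q x)ᶜ
  right_center : Q y = insert y (P y)ᶜ
  mem_right_center : ∀ j, j ≠ y → j ∈ Q x
  mem_left_center : ∀ j, j ≠ x → j ∈ P y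

namespace IsExtremalPair

variable [DecidableEq ι] {P Q : ι → Finset ι} {x y : ι}

theorem symm (h : IsExtremalPair P Q x y) : IsExtremalPair Q P y x where
  ne := h.ne.symm
  left_eq_pair i hy hx := h.right_eq_pair i hx hy
  right_eq_pair i hy hx := h.left_eq_pair i hx hy
  left_center := h.right_center
  right_center := h.left_center
  mem_right_center := h.mem_left_center
  mem_left_center := h.mem_right_center

theorem left_ne_right (h : IsExtremalPair P Q x y) : P ≠ Q := by
  rintro rfl
  have hy : y ∈ P x ↔ y ∈ insert x (P x)ᶜ := by rw [← h.left_center]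
  simp [h.ne.symm] at hy

theorem mem_left_iff (h : IsExtremalPair P Q x y) (i j : ι) :
    j ∈ P i ↔ i = j ∨ (i = y ∧ j ≠ x) ∨ (j = x ∧ i ≠ y) ∨
      (i = y ∧ j = x ∧ x ∈ P y) ∨ (i = x ∧ j = y ∧ y ∉ Q x) := by
  obtain ⟨hxy, hP, -, hPx, -, hQx, hPy⟩ := h
  by_cases hix : i = x
  · subst hix
    grind [Finset.mem_compl]
  · by_cases hiy : i = y <;> grind

theorem card_center (h : IsExtremalPair P Q x y) : #(P x) + #(Q x) = Fintype.card ι + 1 := by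
  have hx : x ∉ (Q x)ᶜ := by simpa using h.mem_right_center x h.ne
  rw [h.left_center, Finset.card_insert_of_notMem hx, ← Finset.card_compl_add_card (Q x)]
  ring

theorem sum_card_add_six (h : IsExtremalPair P Q x y) :
    ∑ i, (#(P i) + #(Q i)) + 6 = 6 * Fintype.card ι := by
  have hrest : ∑ i ∈ ({x, y} : Finset ι)ᶜ, (#(P i) + #(Q i)) = #({x, y} : Finset ι)ᶜ * 4 := by
    refine Finset.sum_const_nat fun i hi => ?_
    obtain ⟨hix, hiy⟩ : i ≠ x ∧ i ≠ y := by simpa using hi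
    rw [h.left_eq_pair i hix hiy, h.right_eq_pair i hix hiy, Finset.card_pair hix,
      Finset.card_pair hiy]
  have hcompl := Finset.card_add_card_compl {x, y}
  rw [Finset.card_pair h.ne] at hcompl
  have hx := h.card_center
  have hy := h.symm.card_center
  rw [← Finset.sum_add_sum_compl {x, y}, Finset.sum_pair h.ne, hrest]
  omega

theorem self_mem_left (h : IsExtremalPair P Q x y) (i : ι) : i ∈ P i :=
  (h.mem_left_iff i i).2 (Or.inl rfl)

theorem exists_mem_left_mem_right (h : IsExtremalPair P Q x y) (i j : ι) :
    ∃ k ∈ P i, j ∈ Q k := by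
  have center {z : ι} (hz : j ∈ P z ∨ j ∈ Q z) : ∃ k ∈ P z, j ∈ Q k :=
    hz.elim (fun hP => ⟨j, hP, h.symm.self_mem_left j⟩) fun hQ => ⟨z, h.self_mem_left z, hQ⟩
  by_cases hiy : i = y
  · rw [hiy]
    exact center (by grind [h.right_center, Finset.mem_compl])
  · by_cases hix : i = x
    · rw [hix]
      exact center (by grind [h.left_center, Finset.mem_compl])
    · by_cases hjy : j = y
      · exact ⟨i, h.self_mem_left i, by simp [h.right_eq_pair i hix hiy, hjy]⟩
      · exact ⟨x, by simp [h.left_eq_pair i hix hiy], h.mem_right_center j hjy⟩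

theorem mutuallyOrthogonal (h : IsExtremalPair P Q x y) : MutuallyOrthogonal P Q where
  mem_left := h.self_mem_left
  mem_right := h.symm.self_mem_left
  cover_left := h.exists_mem_left_mem_right
  cover_right := h.symm.exists_mem_left_mem_right

end IsExtremalPair

namespace MutuallyOrthogonal

variable {P Q : ι → Finset ι} {i j x y : ι}

theorem card_le_sum (h : MutuallyOrthogonal P Q) (i : ι) :
    Fintype.card ι ≤ ∑ k ∈ P i, #(Q k) := by
  classical
  have hcover : (P i).biUnion Q = Finset.univ := by
    ext j
    simpa using h.cover_left i j
  rw [← Finset.card_univ, ← hcover]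
  exact Finset.card_biUnion_le

theorem card_le_card_right (h : MutuallyOrthogonal P Q) (hi : #(P i) ≤ 1) :
    Fintype.card ι ≤ #(Q i) := by
  have hP : P i = {i} :=
    Finset.eq_singleton_iff_unique_mem.2
      ⟨h.mem_left i, fun j hj => Finset.card_le_one.1 hi j hj i (h.mem_left i)⟩
  simpa [hP] using h.card_le_sum i

theorem card_lt_or_two_le (h : MutuallyOrthogonal P Q) (i : ι) :
    Fintype.card ι < #(P i) + #(Q i) ∨ 2 ≤ #(P i) ∧ 2 ≤ #(Q i) := by
  have hP : 0 < #(P i) := Finset.card_pos.2 ⟨i, h.mem_left i⟩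
  have hQ : 0 < #(Q i) := Finset.card_pos.2 ⟨i, h.mem_right i⟩
  have hPQ := h.card_le_card_right (i := i)
  have hQP := h.symm.card_le_card_right (i := i)
  omega

theorem exists_left_eq_pair [DecidableEq ι] (h : MutuallyOrthogonal P Q) (hi : #(P i) = 2) :
    ∃ x, x ≠ i ∧ P i = {i, x} ∧ Fintype.card ι ≤ #(Q i) + #(Q x) := by
  obtain ⟨x, hxi, hP⟩ := exists_eq_pair_of_mem_of_card_eq_two (h.mem_left i) hi
  refine ⟨x, hxi, hP, ?_⟩
  simpa [hP, Finset.sum_pair hxi.symm] using h.card_le_sum i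

theorem card_lt_of_forall_mem_right (h : MutuallyOrthogonal P Q) (hx : ∀ j, j ≠ y → j ∈ Q x) :
    Fintype.card ι < #(P x) + #(Q x) := by
  have hQ := card_le_card_add_one hx
  have hxx := h.card_lt_or_two_le x
  omega

theorem left_center_eq [DecidableEq ι] (h : MutuallyOrthogonal P Q) (hxy : x ≠ y)
    (hP : ∀ i, i ≠ x → i ≠ y → P i = {i, x}) (hQ : ∀ j, j ≠ y → j ∈ Q x)
    (hcard : #(P x) + #(Q x) ≤ Fintype.card ι + 1) : P x = insert x (Q x)ᶜ := by
  have hy : y ∈ P x ∪ Q x := by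
    obtain ⟨k, hk, hyk⟩ := h.cover_right x y
    rw [Finset.mem_union]
    by_cases hkx : k = x
    · exact Or.inl (hkx ▸ hyk)
    · by_cases hky : k = y
      · exact Or.inr (hky ▸ hk)
      · rw [hP k hkx hky] at hyk
        simp [hxy.symm, Ne.symm hky] at hyk
  refine eq_insert_compl_of_card_add_card_le (h.mem_left x) (h.mem_right x) ?_ hcard
  ext j
  grind

theorem isExtremalPair [DecidableEq ι] (h : MutuallyOrthogonal P Q) (hxy : x ≠ y)
    (hP : ∀ i, i ≠ x → i ≠ y → P i = {i, x}) (hQ : ∀ i, i ≠ x → i ≠ y → Q i = {i, y})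
    (hQx : ∀ j, j ≠ y → j ∈ Q x) (hPy : ∀ j, j ≠ x → j ∈ P y)
    (hx : #(P x) + #(Q x) ≤ Fintype.card ι + 1) (hy : #(P y) + #(Q y) ≤ Fintype.card ι + 1) :
    IsExtremalPair P Q x y :=
  ⟨hxy, hP, hQ, h.left_center_eq hxy hP hQx hx,
    h.symm.left_center_eq hxy.symm (fun i hiy hix => hQ i hix hiy) hPy (by omega), hQx, hPy⟩

theorem exists_isExtremalPair_of_card_eq_two [DecidableEq ι]
    (h : MutuallyOrthogonal P Q) (hcard : Fintype.card ι = 2)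
    (hsum : ∑ i, (#(P i) + #(Q i)) + 6 ≤ 6 * Fintype.card ι) : ∃ x y, IsExtremalPair P Q x y := by
  obtain ⟨x, y, hxy, huniv⟩ := Finset.card_eq_two.1 (Finset.card_univ.trans hcard)
  have hall : ∀ i, i = x ∨ i = y := fun i => by simpa [huniv] using Finset.mem_univ i
  have hQx : ∀ j, j ≠ y → j ∈ Q x := fun j hj => (hall j).resolve_right hj ▸ h.mem_right j
  have hPy : ∀ j, j ≠ x → j ∈ P y := fun j hj => (hall j).resolve_left hj ▸ h.mem_left j
  have hx := h.card_lt_of_forall_mem_right hQx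
  have hy := h.symm.card_lt_of_forall_mem_right hPy
  rw [huniv, Finset.sum_pair hxy] at hsum
  exact ⟨x, y, h.isExtremalPair hxy (fun i hix hiy => ((hall i).elim hix hiy).elim)
    (fun i hix hiy => ((hall i).elim hix hiy).elim) hQx hPy (by omega) (by omega)⟩

theorem card_left_ne_two_of_card_right_eq_three (h : MutuallyOrthogonal P Q)
    (hcard : 7 ≤ Fintype.card ι) (hsum : ∑ i, (#(P i) + #(Q i)) + 6 ≤ 6 * Fintype.card ι)
    (hfive : ∀ i, 5 ≤ #(P i) + #(Q i)) (hQi : #(Q i) = 3) : #(P i) ≠ 2 := by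
  classical
  intro hPi
  obtain ⟨x, -, -, hx⟩ := h.exists_left_eq_pair hPi
  have hPx : #(P x) = 2 := by
    have hbound := sum_add_mul_card_le_sum {x} fun i _ => hfive i
    simp only [Finset.sum_singleton, Finset.card_singleton] at hbound
    have hxx := h.card_lt_or_two_le x
    omega
  have hrest : ∀ j, j ≠ x → #(P j) + #(Q j) = 5 := by
    intro j hj
    have hbound := sum_add_mul_card_le_sum {j, x} fun i _ => hfive i
    simp only [Finset.sum_pair hj, Finset.card_pair hj] at hbound
    have hjj := hfive j
    omega
  have hP : ∀ j, #(P j) = 2 := by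
    intro j
    by_cases hjx : j = x
    · rwa [hjx]
    by_contra hPj
    have hj := hrest j hjx
    have hjj := h.card_lt_or_two_le j
    obtain ⟨z, -, -, hz⟩ := h.symm.exists_left_eq_pair (i := j) (by omega)
    have hzx : z ≠ x := by
      rintro rfl
      omega
    have hzz := h.card_lt_or_two_le z
    have hz5 := hrest z hzx
    omega
  have hcover := h.symm.card_le_sum i
  simp only [hP, Finset.sum_const, hQi, smul_eq_mul] at hcover
  omega

theorem exists_card_eq_two (h : MutuallyOrthogonal P Q) (hcard : 7 ≤ Fintype.card ι)
    (hsum : ∑ i, (#(P i) + #(Q i)) + 6 ≤ 6 * Fintype.card ι) :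
    ∃ i, #(P i) = 2 ∧ #(Q i) = 2 := by
  by_contra! hfour
  have hfive : ∀ i, 5 ≤ #(P i) + #(Q i) := fun i => by
    have hii := h.card_lt_or_two_le i
    have hi := hfour i
    omega
  have hsix : ∀ i, 6 ≤ #(P i) + #(Q i) := fun i => by
    have hii := h.card_lt_or_two_le i
    have hi := hfive i
    have hPi := h.card_left_ne_two_of_card_right_eq_three (i := i) hcard hsum hfive
    have hQi := h.symm.card_left_ne_two_of_card_right_eq_three (i := i) hcard
      (by simpa only [add_comm] using hsum) (fun j => by have hj := hfive j; omega)
    omega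
  have hbound := sum_add_mul_card_le_sum ∅ fun i _ => hsix i
  simp only [Finset.sum_empty, Finset.card_empty] at hbound
  omega

theorem four_le_card_add_card (h : MutuallyOrthogonal P Q) (hcard : 3 ≤ Fintype.card ι) (i : ι) :
    4 ≤ #(P i) + #(Q i) := by
  have hii := h.card_lt_or_two_le i
  omega

theorem eq_center_of_card_le (h : MutuallyOrthogonal P Q) (hcard : 7 ≤ Fintype.card ι)
    (hsum : ∑ i, (#(P i) + #(Q i)) + 6 ≤ 6 * Fintype.card ι) (hxy : x ≠ y)
    (hx : Fintype.card ι ≤ #(Q x) + 2) (hy : Fintype.card ι ≤ #(P y) + 2) {z : ι}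
    (hz : Fintype.card ι ≤ #(Q z) + 2) : z = x := by
  classical
  have hfour := h.four_le_card_add_card (by omega)
  by_contra hzx
  have hxx := h.card_lt_or_two_le x
  have hyy := h.card_lt_or_two_le y
  have hzz := h.card_lt_or_two_le z
  by_cases hzy : z = y
  · subst hzy
    have hbound := sum_add_mul_card_le_sum {x, z} fun i _ => hfour i
    simp only [Finset.sum_pair hxy, Finset.card_pair hxy] at hbound
    omega
  · have hbound := add_add_add_mul_card_le_sum hzx hzy hxy fun i _ _ _ => hfour i
    omega

theorem left_eq_pair_center [DecidableEq ι] (h : MutuallyOrthogonal P Q)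
    (hcard : 7 ≤ Fintype.card ι) (hsum : ∑ i, (#(P i) + #(Q i)) + 6 ≤ 6 * Fintype.card ι)
    (hxy : x ≠ y) (hx : Fintype.card ι ≤ #(Q x) + 2)
    (hy : Fintype.card ι ≤ #(P y) + 2) (hPj : #(P j) = 2) (hQj : #(Q j) = 2) : P j = {j, x} := by
  obtain ⟨z, -, hP, hz⟩ := h.exists_left_eq_pair hPj
  rw [hP, h.eq_center_of_card_le hcard hsum hxy hx hy (z := z) (by omega)]

theorem left_eq_pair_of_forall_ne [DecidableEq ι] (h : MutuallyOrthogonal P Q)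
    (hcard : 5 ≤ Fintype.card ι) (htwo : ∀ k, k ≠ x → #(P k) = 2 ∧ #(Q k) = 2) (hjx : j ≠ x) :
    P j = {j, x} := by
  obtain ⟨z, -, hP, hz⟩ := h.exists_left_eq_pair (htwo j hjx).1
  have hzx : z = x := by
    by_contra hne
    have hj := htwo j hjx
    have hz2 := htwo z hne
    omega
  exact hzx ▸ hP

theorem card_le_card_right_add_one_of_eq_pair [DecidableEq ι] (h : MutuallyOrthogonal P Q)
    (hPi : P i = {i, x}) (hQi : Q i = {i, x}) : Fintype.card ι ≤ #(Q x) + 1 := by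
  refine card_le_card_add_one (a := i) fun z hzi => ?_
  have hz : z = x ∨ z ∈ Q x := by simpa [hQi, hzi] using h.mem_or_mem_of_eq_pair hPi z
  exact hz.elim (fun hzx => hzx ▸ h.mem_right x) id

theorem right_ne_pair [DecidableEq ι] (h : MutuallyOrthogonal P Q) (hcard : 5 ≤ Fintype.card ι)
    (hsum : ∑ i, (#(P i) + #(Q i)) + 6 ≤ 6 * Fintype.card ι) (hix : i ≠ x)
    (hPi : P i = {i, x}) : Q i ≠ {i, x} := by
  intro hQi
  have hQx := h.card_le_card_right_add_one_of_eq_pair hPi hQi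
  have hPx := h.symm.card_le_card_right_add_one_of_eq_pair hQi hPi
  have hfour := h.four_le_card_add_card (by omega)
  have htwo : ∀ k, k ≠ x → #(P k) = 2 ∧ #(Q k) = 2 := fun k hk => by
    have hbound := sum_add_mul_card_le_sum {k, x} fun i _ => hfour i
    simp only [Finset.sum_pair hk, Finset.card_pair hk] at hbound
    have hkk := h.card_lt_or_two_le k
    omega
  obtain ⟨j, -, hj⟩ : ∃ j ∈ Finset.univ, j ∉ ({i, x} : Finset ι) :=
    Finset.exists_mem_notMem_of_card_lt_card (by rw [Finset.card_pair hix, Finset.card_univ]; omega)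
  obtain ⟨hji, hjx⟩ : j ≠ i ∧ j ≠ x := by simpa using hj
  have hPj := h.left_eq_pair_of_forall_ne (by omega) htwo hjx
  have hQj := h.symm.left_eq_pair_of_forall_ne (by omega) (fun k hk => (htwo k hk).symm) hjx
  have hQuniv : Q x = Finset.univ := Finset.eq_univ_of_forall fun z => by
    by_cases hzx : z = x
    · exact hzx ▸ h.mem_right x
    · exact h.mem_right_of_eq_pair hji.symm hPi hPj hQi hQj hzx
  have hPuniv : P x = Finset.univ := Finset.eq_univ_of_forall fun z => by
    by_cases hzx : z = x
    · exact hzx ▸ h.mem_left x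
    · exact h.symm.mem_right_of_eq_pair hji.symm hQi hQj hPi hPj hzx
  have hbound := sum_add_mul_card_le_sum {x} fun i _ => hfour i
  simp only [Finset.sum_singleton, hPuniv, hQuniv, Finset.card_univ, Finset.card_singleton]
    at hbound
  omega

theorem exists_ne_card_eq_two (h : MutuallyOrthogonal P Q) (hcard : 6 ≤ Fintype.card ι)
    (hsum : ∑ i, (#(P i) + #(Q i)) + 6 ≤ 6 * Fintype.card ι) (hxy : x ≠ y)
    (hx : Fintype.card ι ≤ #(Q x) + 2) (hy : Fintype.card ι ≤ #(P y) + 2)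
    (hix : i ≠ x) (hiy : i ≠ y) : ∃ j, j ≠ i ∧ #(P j) = 2 ∧ #(Q j) = 2 := by
  by_contra! hne
  have hfive : ∀ j, j ≠ i → j ≠ x → j ≠ y → 5 ≤ #(P j) + #(Q j) := fun j hj _ _ => by
    have hjj := h.card_lt_or_two_le j
    have hjne := hne j hj
    omega
  have hbound := add_add_add_mul_card_le_sum hix hiy hxy hfive
  have hi := h.four_le_card_add_card (by omega) i
  have hxx := h.card_lt_or_two_le x
  have hyy := h.card_lt_or_two_le y
  omega

theorem exists_isExtremalPair_of_seven_le [DecidableEq ι] (h : MutuallyOrthogonal P Q)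
    (hcard : 7 ≤ Fintype.card ι) (hsum : ∑ i, (#(P i) + #(Q i)) + 6 ≤ 6 * Fintype.card ι) :
    ∃ x y, IsExtremalPair P Q x y := by
  obtain ⟨i, hPi, hQi⟩ := h.exists_card_eq_two hcard hsum
  obtain ⟨x, hxi, hPix, hx⟩ := h.exists_left_eq_pair hPi
  obtain ⟨y, hyi, hQiy, hy⟩ := h.symm.exists_left_eq_pair hQi
  replace hx : Fintype.card ι ≤ #(Q x) + 2 := by omega
  replace hy : Fintype.card ι ≤ #(P y) + 2 := by omega
  have hxy : x ≠ y := by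
    rintro rfl
    exact h.right_ne_pair (by omega) hsum hxi.symm hPix hQiy
  have hrows : ∀ j, #(P j) = 2 → #(Q j) = 2 → P j = {j, x} ∧ Q j = {j, y} := fun j hPj hQj =>
    ⟨h.left_eq_pair_center hcard hsum hxy hx hy hPj hQj,
      h.symm.left_eq_pair_center hcard (by simpa only [add_comm] using hsum) hxy.symm hy hx hQj hPj⟩
  obtain ⟨j, hji, hPj, hQj⟩ := h.exists_ne_card_eq_two (by omega) hsum hxy hx hy
    hxi.symm hyi.symm
  obtain ⟨hPjx, hQjy⟩ := hrows j hPj hQj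
  have hQx : ∀ z, z ≠ y → z ∈ Q x := fun z =>
    h.mem_right_of_eq_pair hji.symm hPix hPjx hQiy hQjy
  have hPy : ∀ z, z ≠ x → z ∈ P y := fun z =>
    h.symm.mem_right_of_eq_pair hji.symm hQiy hQjy hPix hPjx
  have hcardx := h.card_lt_of_forall_mem_right hQx
  have hcardy := h.symm.card_lt_of_forall_mem_right hPy
  have hfour := h.four_le_card_add_card (by omega)
  have hrest : ∀ k, k ≠ x → k ≠ y → P k = {k, x} ∧ Q k = {k, y} := fun k hkx hky => by
    have hbound := add_add_add_mul_card_le_sum hkx hky hxy fun i _ _ _ => hfour i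
    have hkk := h.card_lt_or_two_le k
    exact hrows k (by omega) (by omega)
  have hbound := sum_add_mul_card_le_sum {x, y} fun i _ => hfour i
  simp only [Finset.sum_pair hxy, Finset.card_pair hxy] at hbound
  exact ⟨x, y, h.isExtremalPair hxy (fun k hkx hky => (hrest k hkx hky).1)
    (fun k hkx hky => (hrest k hkx hky).2) hQx hPy (by omega) (by omega)⟩

theorem exists_isExtremalPair [DecidableEq ι] (h : MutuallyOrthogonal P Q)
    (hcard : Fintype.card ι = 2 ∨ 7 ≤ Fintype.card ι)
    (hsum : ∑ i, (#(P i) + #(Q i)) + 6 ≤ 6 * Fintype.card ι) : ∃ x y, IsExtremalPair P Q x y :=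
  hcard.elim (fun htwo => h.exists_isExtremalPair_of_card_eq_two htwo hsum) fun hseven =>
    h.exists_isExtremalPair_of_seven_le hseven hsum

end MutuallyOrthogonal

end Rows

section Matrices

variable {n : ℕ} {A B : Matrix (Fin n) (Fin n) ℤ}

/-- The set of columns in which row `i` of `A` has a zero. -/
def zeroRow (A : Matrix (Fin n) (Fin n) ℤ) (i : Fin n) : Finset (Fin n) :=
  Finset.univ.filter fun j => A i j = 0

theorem mem_zeroRow {i j : Fin n} : j ∈ zeroRow A i ↔ A i j = 0 := by
  simp [zeroRow]

theorem nu_add_nu (A B : Matrix (Fin n) (Fin n) ℤ) :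
    nu A + nu B = ∑ i, (#(zeroRow A i) + #(zeroRow B i)) := by
  simp only [nu, zeroRow, Finset.card_filter, Fintype.sum_prod_type, Finset.sum_add_distrib]

theorem IsNormal.nonpos (hA : IsNormal A) (i j : Fin n) : A i j ≤ 0 := by
  have := hA.2 i j
  omega

theorem tropMul_apply_eq_zero_iff (hA : ∀ i j, A i j ≤ 0) (hB : ∀ i j, B i j ≤ 0) (i j : Fin n) :
    tropMul A B i j = 0 ↔ ∃ k, A i k = 0 ∧ B k j = 0 := by
  have hupper : 0 ∈ upperBounds (Set.range fun k => A i k + B k j) := by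
    rintro _ ⟨k, rfl⟩
    exact add_nonpos (hA i k) (hB k j)
  constructor
  · intro hzero
    obtain ⟨k, hk⟩ := Int.csSup_mem ⟨_, Set.mem_range_self i⟩ ⟨0, hupper⟩
    have hsum : A i k + B k j = 0 := hk.trans hzero
    have hAk := hA i k
    have hBk := hB k j
    exact ⟨k, by omega, by omega⟩
  · rintro ⟨k, hAk, hBk⟩
    exact IsGreatest.csSup_eq ⟨⟨k, by simp [hAk, hBk]⟩, hupper⟩

theorem mutuallyOrthogonal_zeroRow_iff (hA : IsNormal A) (hB : IsNormal B) :
    MutuallyOrthogonal (zeroRow A) (zeroRow B) ↔ tropMul A B = 0 ∧ tropMul B A = 0 := by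
  simp only [← Matrix.ext_iff, Matrix.zero_apply, tropMul_apply_eq_zero_iff hA.nonpos hB.nonpos,
    tropMul_apply_eq_zero_iff hB.nonpos hA.nonpos]
  constructor
  · intro h
    simpa only [mem_zeroRow] using And.intro h.cover_left h.cover_right
  · rintro ⟨hAB, hBA⟩
    exact ⟨fun i => mem_zeroRow.2 (hA.1 i), fun i => mem_zeroRow.2 (hB.1 i),
      by simpa only [mem_zeroRow] using hAB, by simpa only [mem_zeroRow] using hBA⟩

theorem IsExtremalPair.generic {k m : Fin n} (h : IsExtremalPair (zeroRow A) (zeroRow B) k m) :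
    (genV m k A ∧ genV k m B) ∨ (genWZ m k A ∧ genWZ k m B) ∨
      (genW m k A ∧ genWZZ k m B) ∨ (genWZZ m k A ∧ genW k m B) := by
  have hA := h.mem_left_iff
  have hB := h.symm.mem_left_iff
  simp only [mem_zeroRow] at hA hB
  by_cases hAmk : A m k = 0 <;> by_cases hBkm : B k m = 0
  · refine Or.inl ⟨fun i j => ?_, fun i j => ?_⟩ <;> grind [h.ne]
  · refine Or.inr (Or.inr (Or.inr ⟨fun i j => ?_, fun i j => ?_⟩)) <;> grind [h.ne]
  · refine Or.inr (Or.inr (Or.inl ⟨fun i j => ?_, fun i j => ?_⟩)) <;> grind [h.ne]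
  · refine Or.inr (Or.inl ⟨fun i j => ?_, fun i j => ?_⟩) <;> grind [h.ne]

theorem isExtremalPair_of_generic {k m : Fin n} (hkm : k ≠ m)
    (hgen : (genV m k A ∧ genV k m B) ∨ (genWZ m k A ∧ genWZ k m B) ∨
      (genW m k A ∧ genWZZ k m B) ∨ (genWZZ m k A ∧ genW k m B)) :
    IsExtremalPair (zeroRow A) (zeroRow B) k m := by
  refine ⟨hkm, ?_, ?_, ?_, ?_, ?_, ?_⟩ <;>
    simp only [Finset.ext_iff, Finset.mem_insert, Finset.mem_singleton, Finset.mem_compl,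
      mem_zeroRow] <;>
    rcases hgen with ⟨hA, hB⟩ | ⟨hA, hB⟩ | ⟨hA, hB⟩ | ⟨hA, hB⟩ <;>
    grind [genV, genW, genWZ, genWZZ]

theorem IsExtremalPair.nu_add_nu_add_six {k m : Fin n}
    (h : IsExtremalPair (zeroRow A) (zeroRow B) k m) : nu A + nu B + 6 = 6 * n := by
  rw [nu_add_nu, h.sum_card_add_six, Fintype.card_fin]

/-- The normal `V(m;k)`-generic matrix. -/
def vMatrix (m k : Fin n) : Matrix (Fin n) (Fin n) ℤ :=
  Matrix.of fun i j => if i = j ∨ i = m ∨ j = k then 0 else -1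

theorem isNormal_vMatrix (m k : Fin n) : IsNormal (vMatrix m k) :=
  ⟨fun i => by simp [vMatrix], fun i j => ite_eq_or_eq _ _ _⟩

theorem genV_vMatrix (m k : Fin n) : genV m k (vMatrix m k) := fun i j => by
  simp only [vMatrix, Matrix.of_apply]
  split_ifs with h <;> simp [h]

theorem exists_tropMul_eq_zero_and_nu_add_nu (hn : 2 ≤ n) :
    ∃ A B : Matrix (Fin n) (Fin n) ℤ, IsNormal A ∧ IsNormal B ∧ tropMul A B = 0 ∧
      tropMul B A = 0 ∧ nu A + nu B + 6 = 6 * n := by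
  have : Nontrivial (Fin n) := Fin.nontrivial_iff_two_le.2 hn
  obtain ⟨k, m, hkm⟩ := exists_pair_ne (Fin n)
  have hext := isExtremalPair_of_generic hkm (Or.inl ⟨genV_vMatrix m k, genV_vMatrix k m⟩)
  have horth := (mutuallyOrthogonal_zeroRow_iff (isNormal_vMatrix m k) (isNormal_vMatrix k m)).1
    hext.mutuallyOrthogonal
  exact ⟨_, _, isNormal_vMatrix m k, isNormal_vMatrix k m, horth.1, horth.2,
    hext.nu_add_nu_add_six⟩

theorem exists_isExtremalPair_zeroRow (hn : n = 2 ∨ 7 ≤ n) (hA : IsNormal A) (hB : IsNormal B)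
    (hAB : tropMul A B = 0) (hBA : tropMul B A = 0) (hnu : nu A + nu B + 6 ≤ 6 * n) :
    ∃ k m, IsExtremalPair (zeroRow A) (zeroRow B) k m :=
  ((mutuallyOrthogonal_zeroRow_iff hA hB).2 ⟨hAB, hBA⟩).exists_isExtremalPair
    (by simpa only [Fintype.card_fin] using hn)
    (by simpa only [nu_add_nu, Fintype.card_fin] using hnu)

end Matrices

theorem stmt_12 {n : ℕ} (hn : n = 2 ∨ 7 ≤ n) (A B : Matrix (Fin n) (Fin n) ℤ)
    (hA : IsNormal A) (hB : IsNormal B) :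
    (tropMul A B = 0 ∧ tropMul B A = 0 ∧
      ∀ A' B' : Matrix (Fin n) (Fin n) ℤ, IsNormal A' → IsNormal B' →
        tropMul A' B' = 0 → tropMul B' A' = 0 → nu A + nu B ≤ nu A' + nu B') ↔
    (A ≠ B ∧ ∃ k m : Fin n, k ≠ m ∧
      ((genV m k A ∧ genV k m B) ∨
       (genWZ m k A ∧ genWZ k m B) ∨
       (genW m k A ∧ genWZZ k m B) ∨
       (genWZZ m k A ∧ genW k m B))) := by
  constructor
  · rintro ⟨hAB, hBA, hmin⟩
    obtain ⟨A', B', hA', hB', hAB', hBA', hnu⟩ :=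
      exists_tropMul_eq_zero_and_nu_add_nu (n := n) (by omega)
    have hle := hmin A' B' hA' hB' hAB' hBA'
    obtain ⟨k, m, h⟩ := exists_isExtremalPair_zeroRow hn hA hB hAB hBA (by omega)
    exact ⟨fun hAB_eq => h.left_ne_right (congrArg zeroRow hAB_eq), k, m, h.ne, h.generic⟩
  · rintro ⟨-, k, m, hkm, hgen⟩
    have h := isExtremalPair_of_generic hkm hgen
    obtain ⟨hAB, hBA⟩ := (mutuallyOrthogonal_zeroRow_iff hA hB).1 h.mutuallyOrthogonal
    refine ⟨hAB, hBA, fun A' B' hA' hB' hAB' hBA' => ?_⟩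
    by_contra! hlt
    have hnu := h.nu_add_nu_add_six
    obtain ⟨k', m', h'⟩ := exists_isExtremalPair_zeroRow hn hA' hB' hAB' hBA' (by omega)
    have hnu' := h'.nu_add_nu_add_six
    omega
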